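/- For every integer N ≥ 0, as λ → +∞ through real values, ∫_0^{+∞} e^{−λ(x − log(1+x))} dx = Σ_{n=0}^{N−1} Γ((n+1)/2) c_n λ^{−(n+1)/2} + O(λ^{−(N+1)/2}). -/

import Mathlib

open Finset MeasureTheory Real Asymptotics Filter

/-- Partial ordinary Bell polynomials: `obell f n k` is the coefficient of `x^n` in
`(∑_{m ≥ 1} f m * x^m)^k`, i.e. `B_{n,k}(f₁, …, f_{n-k+1})`. -/
noncomputable def obell (f : ℕ → ℝ) (n k : ℕ) : ℝ :=
  PowerSeries.coeff n ((PowerSeries.mk fun m => if m = 0 then 0 else f m) ^ k)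

/-- The coefficients of the asymptotic expansion of `∫_0^∞ e^{-λ(x - log(1+x))} dx`:
`c_n = (1/(2Γ((n+1)/2))) ∑_{k=0}^n ((-1)^k 2^{(n+1)/2+k}/k!) Γ((n+1)/2+k)
B_{n,k}(a₁,…,a_{n-k+1})` with `a_m = (-1)^m/(m+2)`. -/
noncomputable def laplaceCoeff (n : ℕ) : ℝ :=
  (1 / (2 * Real.Gamma (((n : ℝ) + 1) / 2))) *
    ∑ k ∈ Finset.range (n + 1),
      ((-1 : ℝ) ^ k * (2 : ℝ) ^ (((n : ℝ) + 1) / 2 + k) / (Nat.factorial k : ℝ)) *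
        Real.Gamma (((n : ℝ) + 1) / 2 + k) *
        obell (fun m => (-1 : ℝ) ^ m / ((m : ℝ) + 2)) n k

/-! ### Expansion of the phase function -/

/-- `(x - log(1+x))/x² - 1/2`. -/
noncomputable def phS (x : ℝ) : ℝ := (x - Real.log (1 + x)) / x ^ 2 - 1 / 2

/-- The formal power series of `phS`. -/
noncomputable def phP : PowerSeries ℝ :=
  PowerSeries.mk fun m => if m = 0 then 0 else (-1 : ℝ) ^ m / ((m : ℝ) + 2)

lemma phase_eq {x : ℝ} (hx : 0 < x) :
    x - Real.log (1 + x) = x ^ 2 / 2 + x ^ 2 * phS x := by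
  unfold phS
  field_simp
  ring

lemma phase_lower {x : ℝ} (hx : 0 < x) :
    x ^ 2 / (2 * (1 + x)) ≤ x - Real.log (1 + x) := by
  have h0 : 0 ≤ Real.log (1 + x) := Real.log_nonneg (by linarith)
  have h1 := Real.self_le_sinh_iff.2 h0
  rw [Real.sinh_log (by linarith)] at h1
  have h2 : x - ((1 + x) - (1 + x)⁻¹) / 2 = x ^ 2 / (2 * (1 + x)) := by
    field_simp
    ring
  linarith

lemma phase_upper {x : ℝ} (hx : 0 < x) :
    x - Real.log (1 + x) ≤ x ^ 2 / 2 := by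
  have h1 := Real.le_log_one_add_of_nonneg hx.le
  have h2 : x - x ^ 2 / 2 ≤ 2 * x / (x + 2) := by
    rw [le_div_iff₀ (by linarith)]
    nlinarith [pow_pos hx 3]
  linarith

lemma phS_nonpos {x : ℝ} (hx : 0 < x) : phS x ≤ 0 := by
  have h := phase_upper hx
  have h2 := phase_eq hx
  have h3 : 0 < x ^ 2 := by positivity
  by_contra hc
  push Not at hc
  nlinarith [mul_pos h3 hc]

lemma phS_abs {x : ℝ} (hx : 0 < x) : |phS x| ≤ 1 := by
  have h := phase_lower hx
  have h2 : 0 ≤ x ^ 2 / (2 * (1 + x)) := by positivity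
  have h3 : 0 ≤ (x - Real.log (1 + x)) / x ^ 2 := div_nonneg (by linarith) (by positivity)
  have h4 := phS_nonpos hx
  rw [abs_le]
  constructor
  · unfold phS; linarith
  · linarith

lemma exp_phase_le {x l : ℝ} (hx : 0 < x) (hl : 0 < l) :
    Real.exp (-l * (x - Real.log (1 + x))) ≤
      Real.exp (-(1 / 4 * l) * x ^ 2) + Real.exp (-(1 / 4 * l) * x) := by
  have h := phase_lower hx
  rcases le_total x 1 with h1 | h1
  · have h2 : x ^ 2 / 4 ≤ x ^ 2 / (2 * (1 + x)) := by
      apply div_le_div_of_nonneg_left <;> nlinarith [sq_nonneg x]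
    have : Real.exp (-l * (x - Real.log (1 + x))) ≤ Real.exp (-(1 / 4 * l) * x ^ 2) := by
      apply Real.exp_le_exp.2
      nlinarith [mul_le_mul_of_nonneg_left (h2.trans h) hl.le]
    linarith [Real.exp_pos (-(1 / 4 * l) * x)]
  · have h2 : x / 4 ≤ x ^ 2 / (2 * (1 + x)) := by
      rw [div_le_div_iff₀ (by norm_num) (by linarith)]
      nlinarith
    have : Real.exp (-l * (x - Real.log (1 + x))) ≤ Real.exp (-(1 / 4 * l) * x) := by
      apply Real.exp_le_exp.2
      nlinarith [mul_le_mul_of_nonneg_left (h2.trans h) hl.le]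
    linarith [Real.exp_pos (-(1 / 4 * l) * x ^ 2)]

/-- `F` has asymptotic expansion `p` near `0`. -/
def Apx (F : ℝ → ℝ) (p : PowerSeries ℝ) : Prop :=
  ∀ N : ℕ, ∃ C : ℝ, 0 ≤ C ∧ ∀ x : ℝ, 0 < x → x ≤ 1 / 2 →
    |F x - ∑ n ∈ Finset.range N, PowerSeries.coeff n p * x ^ n| ≤ C * x ^ N

lemma Apx.mul {F G : ℝ → ℝ} {p q : PowerSeries ℝ} (hF : Apx F p) (hG : Apx G q) :
    Apx (fun x => F x * G x) (p * q) := by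
  intro N
  obtain ⟨C, hC, hCF⟩ := hF N
  obtain ⟨M, hM, hMG⟩ := hG 0
  choose D hD hDG using hG
  refine ⟨C * M + ∑ i ∈ Finset.range N, |PowerSeries.coeff i p| * D (N - i), ?_, ?_⟩
  · have : 0 ≤ ∑ i ∈ Finset.range N, |PowerSeries.coeff i p| * D (N - i) :=
      Finset.sum_nonneg fun i _ => mul_nonneg (abs_nonneg _) (hD _)
    positivity
  intro x hx hx2
  have key : ∑ n ∈ Finset.range N, PowerSeries.coeff n (p * q) * x ^ n =
      ∑ i ∈ Finset.range N, ∑ j ∈ Finset.range (N - i),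
        (PowerSeries.coeff i p * x ^ i) * (PowerSeries.coeff j q * x ^ j) := by
    rw [← Finset.sum_range_diag_flip N fun i j =>
      (PowerSeries.coeff i p * x ^ i) * (PowerSeries.coeff j q * x ^ j)]
    refine Finset.sum_congr rfl fun n _ => ?_
    rw [PowerSeries.coeff_mul, Finset.Nat.sum_antidiagonal_eq_sum_range_succ_mk, Finset.sum_mul]
    refine Finset.sum_congr rfl fun i hi => ?_
    have hi' : i ≤ n := Nat.lt_succ_iff.1 (Finset.mem_range.1 hi)
    have : x ^ n = x ^ i * x ^ (n - i) := by rw [← pow_add, Nat.add_sub_cancel' hi']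
    rw [this]
    ring
  have e : F x * G x - ∑ n ∈ Finset.range N, PowerSeries.coeff n (p * q) * x ^ n =
      (F x - ∑ i ∈ Finset.range N, PowerSeries.coeff i p * x ^ i) * G x +
      ∑ i ∈ Finset.range N, (PowerSeries.coeff i p * x ^ i) *
        (G x - ∑ j ∈ Finset.range (N - i), PowerSeries.coeff j q * x ^ j) := by
    rw [key]
    simp only [mul_sub, Finset.sum_sub_distrib, sub_mul, Finset.sum_mul, Finset.mul_sum]
    ring
  simp only
  rw [e]
  have hG0 : |G x| ≤ M := by simpa using hMG x hx hx2
  refine (abs_add_le _ _).trans ?_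
  rw [add_mul]
  apply add_le_add
  · rw [abs_mul]
    calc _ ≤ (C * x ^ N) * M := mul_le_mul (hCF x hx hx2) hG0 (abs_nonneg _) (by positivity)
      _ = _ := by ring
  · refine (Finset.abs_sum_le_sum_abs _ _).trans ?_
    rw [Finset.sum_mul]
    refine Finset.sum_le_sum fun i hi => ?_
    have hi' : i ≤ N := (Finset.mem_range.1 hi).le
    have : x ^ N = x ^ i * x ^ (N - i) := by rw [← pow_add, Nat.add_sub_cancel' hi']
    rw [abs_mul, abs_mul, abs_of_pos (pow_pos hx i), this]
    calc _ ≤ |PowerSeries.coeff i p| * x ^ i * (D (N - i) * x ^ (N - i)) :=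
          mul_le_mul_of_nonneg_left (hDG _ x hx hx2) (by positivity)
      _ = _ := by ring

lemma Apx.one : Apx (fun _ => 1) 1 := by
  intro N
  refine ⟨1, zero_le_one, fun x hx _ => ?_⟩
  cases N with
  | zero => simp
  | succ n =>
    rw [Finset.sum_range_succ']
    simp [PowerSeries.coeff_one]
    positivity

lemma Apx.pow {F : ℝ → ℝ} {p : PowerSeries ℝ} (hF : Apx F p) (k : ℕ) :
    Apx (fun x => F x ^ k) (p ^ k) := by
  induction k with
  | zero => simpa using Apx.one
  | succ k ih => simpa [pow_succ] using ih.mul hF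

lemma apx_phS : Apx phS phP := by
  intro N
  rcases Nat.eq_zero_or_pos N with rfl | hN
  · refine ⟨1, zero_le_one, fun x hx _ => ?_⟩
    simpa using phS_abs hx
  refine ⟨2, by norm_num, fun x hx hx2 => ?_⟩
  have hax : |(-x)| = x := by rw [abs_neg, abs_of_pos hx]
  have h := Real.abs_log_sub_add_sum_range_le (x := -x) (by rw [hax]; linarith) (N + 1)
  rw [hax, sub_neg_eq_add] at h
  have e1 : ∑ n ∈ Finset.range N, PowerSeries.coeff n phP * x ^ n =
      ∑ n ∈ Finset.range N, (-1 : ℝ) ^ n / ((n : ℝ) + 2) * x ^ n - 1 / 2 := by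
    obtain ⟨n, rfl⟩ : ∃ n, N = n + 1 := ⟨N - 1, by omega⟩
    rw [Finset.sum_range_succ', Finset.sum_range_succ']
    simp [phP]
  have e2 : ∑ i ∈ Finset.range (N + 1), (-x) ^ (i + 1) / ((i : ℝ) + 1) =
      x ^ 2 * (∑ n ∈ Finset.range N, (-1 : ℝ) ^ n / ((n : ℝ) + 2) * x ^ n) - x := by
    rw [Finset.sum_range_succ', Finset.mul_sum]
    simp only [Nat.cast_zero, zero_add, pow_one, div_one, ← sub_eq_add_neg]
    congr 1
    refine Finset.sum_congr rfl fun i _ => ?_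
    have : (-x) ^ (i + 1 + 1) = (-1) ^ i * x ^ i * x ^ 2 := by
      rw [neg_pow]; ring
    rw [this]
    push_cast
    have : (i : ℝ) + 1 + 1 = i + 2 := by ring
    rw [this]
    ring
  rw [e1]
  have e3 : phS x - (∑ n ∈ Finset.range N, (-1 : ℝ) ^ n / ((n : ℝ) + 2) * x ^ n - 1 / 2) =
      -(∑ i ∈ Finset.range (N + 1), (-x) ^ (i + 1) / ((i : ℝ) + 1) + Real.log (1 + x)) / x ^ 2 := by
    rw [e2]
    unfold phS
    field_simp
    ring
  rw [e3, abs_div, abs_neg, abs_of_pos (pow_pos hx 2), div_le_iff₀ (by positivity)]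
  refine h.trans ?_
  rw [div_le_iff₀ (by linarith)]
  have : 0 < x ^ (N + 1 + 1) := by positivity
  have h4 : x ^ N * x ^ 2 = x ^ (N + 1 + 1) := by ring
  rw [mul_assoc 2, h4]
  nlinarith

/-- Global version of the expansion. -/
lemma phS_pow_global (k N : ℕ) : ∃ C : ℝ, 0 ≤ C ∧ ∀ x : ℝ, 0 < x →
    |phS x ^ k - ∑ n ∈ Finset.range N, PowerSeries.coeff n (phP ^ k) * x ^ n| ≤ C * x ^ N := by
  obtain ⟨C, hC, h⟩ := apx_phS.pow k N
  set T := ∑ n ∈ Finset.range N, |PowerSeries.coeff n (phP ^ k)| with hT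
  have hT0 : 0 ≤ T := Finset.sum_nonneg fun i _ => abs_nonneg _
  refine ⟨C + (1 + T) * 2 ^ N, by positivity, fun x hx => ?_⟩
  have hxN : 0 < x ^ N := by positivity
  rcases le_total x (1 / 2) with hx2 | hx2
  · refine (h x hx hx2).trans ?_
    gcongr
    have : 0 ≤ (1 + T) * 2 ^ N := by positivity
    linarith
  · have hy : 1 ≤ 2 * x := by linarith
    have h1 : |phS x ^ k| ≤ (2 * x) ^ N := by
      rw [abs_pow]
      exact (pow_le_one₀ (abs_nonneg _) (phS_abs hx)).trans (one_le_pow₀ hy)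
    have h2 : |∑ n ∈ Finset.range N, PowerSeries.coeff n (phP ^ k) * x ^ n| ≤ T * (2 * x) ^ N := by
      refine (Finset.abs_sum_le_sum_abs _ _).trans ?_
      rw [hT, Finset.sum_mul]
      refine Finset.sum_le_sum fun i hi => ?_
      rw [abs_mul, abs_of_pos (pow_pos hx i)]
      refine mul_le_mul_of_nonneg_left ?_ (abs_nonneg _)
      calc x ^ i ≤ (2 * x) ^ i := by gcongr; linarith
        _ ≤ (2 * x) ^ N := pow_le_pow_right₀ hy (Finset.mem_range.1 hi).le
    refine (abs_sub _ _).trans ?_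
    have h3 : (2 * x) ^ N = 2 ^ N * x ^ N := mul_pow _ _ _
    rw [h3] at h1 h2
    nlinarith [mul_nonneg hC hxN.le]

lemma phS_lin : ∃ C : ℝ, 0 ≤ C ∧ ∀ x : ℝ, 0 < x → |phS x| ≤ C * x := by
  obtain ⟨C, hC, h⟩ := phS_pow_global 1 1
  refine ⟨C, hC, fun x hx => ?_⟩
  simpa [phP] using h x hx

/-! ### Integrals -/

lemma gauss_int (m : ℕ) {b : ℝ} (hb : 0 < b) :
    IntegrableOn (fun x : ℝ => x ^ m * Real.exp (-b * x ^ 2)) (Set.Ioi 0) ∧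
    ∫ x in Set.Ioi (0 : ℝ), x ^ m * Real.exp (-b * x ^ 2) =
      b ^ (-(((m : ℝ) + 1) / 2)) * (1 / 2) * Real.Gamma (((m : ℝ) + 1) / 2) := by
  have hm : (-1 : ℝ) < m := by have := Nat.cast_nonneg (α := ℝ) m; linarith
  constructor
  · simpa using integrableOn_rpow_mul_exp_neg_mul_sq hb hm
  · have := integral_rpow_mul_exp_neg_mul_rpow (p := 2) (q := m) two_pos hm hb
    rw [neg_div] at this
    simpa only [Real.rpow_natCast, Real.rpow_two] using this

lemma lin_int (m : ℕ) {b : ℝ} (hb : 0 < b) :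
    IntegrableOn (fun x : ℝ => x ^ m * Real.exp (-b * x)) (Set.Ioi 0) ∧
    ∫ x in Set.Ioi (0 : ℝ), x ^ m * Real.exp (-b * x) =
      b ^ (-((m : ℝ) + 1)) * Real.Gamma ((m : ℝ) + 1) := by
  have hm : (-1 : ℝ) < m := by have := Nat.cast_nonneg (α := ℝ) m; linarith
  constructor
  · simpa using integrableOn_rpow_mul_exp_neg_mul_rpow (p := 1) hm one_pos hb
  · have := integral_rpow_mul_exp_neg_mul_rpow (p := 1) (q := m) one_pos hm hb
    simpa using this

/-- Families of functions whose integrals are `O(l^{-(N+1)/2})`. -/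
def Sml (N : ℕ) (g : ℝ → ℝ → ℝ) : Prop :=
  ∃ K : ℝ, ∀ l : ℝ, 1 ≤ l → IntegrableOn (g l) (Set.Ioi 0) ∧
    ∫ x in Set.Ioi (0 : ℝ), g l x ≤ K * l ^ (-(((N : ℝ) + 1) / 2))

lemma Sml.add {N : ℕ} {g h : ℝ → ℝ → ℝ} (hg : Sml N g) (hh : Sml N h) :
    Sml N (fun l x => g l x + h l x) := by
  obtain ⟨K, hK⟩ := hg
  obtain ⟨L, hL⟩ := hh
  refine ⟨K + L, fun l hl => ⟨(hK l hl).1.add (hL l hl).1, ?_⟩⟩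
  rw [integral_add (hK l hl).1 (hL l hl).1, add_mul]
  exact add_le_add (hK l hl).2 (hL l hl).2

lemma Sml.const_mul {N : ℕ} {g : ℝ → ℝ → ℝ} (hg : Sml N g) {c : ℝ} (hc : 0 ≤ c) :
    Sml N (fun l x => c * g l x) := by
  obtain ⟨K, hK⟩ := hg
  refine ⟨c * K, fun l hl => ⟨(hK l hl).1.const_mul c, ?_⟩⟩
  rw [integral_const_mul, mul_assoc]
  exact mul_le_mul_of_nonneg_left (hK l hl).2 hc

lemma Sml.sum {N : ℕ} {g : ℕ → ℝ → ℝ → ℝ} (hg : ∀ k, Sml N (g k)) (M : ℕ) :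
    Sml N (fun l x => ∑ k ∈ Finset.range M, g k l x) := by
  induction M with
  | zero => exact ⟨0, fun l _ => by simp⟩
  | succ M ih => simpa only [Finset.sum_range_succ] using ih.add (hg M)

lemma sml_gauss (N k m : ℕ) (hm : m = 2 * k + N) {β : ℝ} (hβ : 0 < β) :
    Sml N (fun l x => l ^ k * (x ^ m * Real.exp (-(β * l) * x ^ 2))) := by
  refine ⟨β ^ (-(((m : ℝ) + 1) / 2)) * (1 / 2) * Real.Gamma (((m : ℝ) + 1) / 2), fun l hl => ?_⟩
  have hl0 : 0 < l := by linarith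
  obtain ⟨h1, h2⟩ := gauss_int m (mul_pos hβ hl0)
  refine ⟨h1.const_mul _, le_of_eq ?_⟩
  rw [integral_const_mul, h2, Real.mul_rpow hβ.le hl0.le]
  have : l ^ k * l ^ (-(((m : ℝ) + 1) / 2)) = l ^ (-(((N : ℝ) + 1) / 2)) := by
    rw [← Real.rpow_natCast, ← Real.rpow_add hl0]
    congr 1
    rw [hm]
    push_cast
    ring
  rw [← this]
  ring

lemma sml_lin (N : ℕ) {β : ℝ} (hβ : 0 < β) :
    Sml N (fun l x => l ^ N * (x ^ (3 * N) * Real.exp (-(β * l) * x))) := by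
  refine ⟨β ^ (-((((3 * N : ℕ) : ℝ) + 1))) * Real.Gamma (((3 * N : ℕ) : ℝ) + 1), fun l hl => ?_⟩
  have hl0 : 0 < l := by linarith
  obtain ⟨h1, h2⟩ := lin_int (3 * N) (mul_pos hβ hl0)
  refine ⟨h1.const_mul _, ?_⟩
  rw [integral_const_mul, h2, Real.mul_rpow hβ.le hl0.le]
  have : l ^ N * l ^ (-((((3 * N : ℕ) : ℝ) + 1))) ≤ l ^ (-(((N : ℝ) + 1) / 2)) := by
    rw [← Real.rpow_natCast, ← Real.rpow_add hl0]
    apply Real.rpow_le_rpow_of_exponent_le hl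
    push_cast
    have := Nat.cast_nonneg (α := ℝ) N
    linarith
  have hG : 0 ≤ β ^ (-((((3 * N : ℕ) : ℝ) + 1))) * Real.Gamma (((3 * N : ℕ) : ℝ) + 1) :=
    mul_nonneg (by positivity) (Real.Gamma_nonneg_of_nonneg (by positivity))
  calc _ = β ^ (-((((3 * N : ℕ) : ℝ) + 1))) * Real.Gamma (((3 * N : ℕ) : ℝ) + 1) *
        (l ^ N * l ^ (-((((3 * N : ℕ) : ℝ) + 1)))) := by ring
    _ ≤ _ := mul_le_mul_of_nonneg_left this hG

lemma integrable_phase {l : ℝ} (hl : 0 < l) :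
    IntegrableOn (fun x => Real.exp (-l * (x - Real.log (1 + x)))) (Set.Ioi 0) := by
  have h1 := (gauss_int 0 (b := 1 / 4 * l) (by positivity)).1
  have h2 := (lin_int 0 (b := 1 / 4 * l) (by positivity)).1
  simp only [pow_zero, one_mul] at h1 h2
  refine Integrable.mono' (h1.add h2) ?_ ?_
  · exact Measurable.aestronglyMeasurable (by fun_prop)
  · filter_upwards [ae_restrict_mem measurableSet_Ioi] with x hx
    rw [Real.norm_eq_abs, Real.abs_exp]
    exact exp_phase_le hx hl

lemma exp_rem {u : ℝ} (hu : 0 ≤ u) (N : ℕ) :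
    |Real.exp u - ∑ k ∈ Finset.range N, u ^ k / (Nat.factorial k : ℝ)| ≤ u ^ N * Real.exp u := by
  have h := Complex.norm_exp_sub_sum_le_norm_mul_exp (u : ℂ) N
  rw [Complex.norm_real, Real.norm_eq_abs, abs_of_nonneg hu] at h
  rw [← Real.norm_eq_abs, ← Complex.norm_real]
  push_cast
  exact h

/-- The model integrand. -/
noncomputable def modl (N : ℕ) (l x : ℝ) : ℝ :=
  ∑ n ∈ Finset.range N, ∑ k ∈ Finset.range N,
    ((-l) ^ k / (Nat.factorial k : ℝ) * PowerSeries.coeff n (phP ^ k)) *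
      (x ^ (n + 2 * k) * Real.exp (-(1 / 2 * l) * x ^ 2))

lemma pointwise (N : ℕ) : ∃ g : ℝ → ℝ → ℝ, Sml N g ∧ ∀ l : ℝ, 1 ≤ l → ∀ x : ℝ, 0 < x →
    |Real.exp (-l * (x - Real.log (1 + x))) - modl N l x| ≤ g l x := by
  obtain ⟨C, hC, hS⟩ := phS_lin
  choose D hD hDS using fun k => phS_pow_global k N
  refine ⟨fun l x => C ^ N * (l ^ N * (x ^ (3 * N) * Real.exp (-(1 / 4 * l) * x ^ 2)) +
    l ^ N * (x ^ (3 * N) * Real.exp (-(1 / 4 * l) * x))) +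
    ∑ k ∈ Finset.range N, D k * (l ^ k * (x ^ (2 * k + N) * Real.exp (-(1 / 2 * l) * x ^ 2))),
    ?_, ?_⟩
  · refine Sml.add (Sml.const_mul (Sml.add ?_ ?_) (by positivity)) (Sml.sum (fun k => ?_) N)
    · exact sml_gauss N N (3 * N) (by ring) (by norm_num)
    · exact sml_lin N (by norm_num)
    · exact (sml_gauss N k (2 * k + N) rfl (by norm_num)).const_mul (hD k)
  intro l hl x hx
  have hl0 : 0 < l := by linarith
  set E := Real.exp (-(1 / 2 * l) * x ^ 2) with hE
  have hE0 : 0 < E := Real.exp_pos _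
  set u := -l * x ^ 2 * phS x with hu
  have hu0 : 0 ≤ u := by
    have := phS_nonpos hx
    have h2 : 0 ≤ l * x ^ 2 := by positivity
    rw [hu]
    nlinarith [mul_nonneg h2 (neg_nonneg.2 this)]
  have huE : Real.exp (-l * (x - Real.log (1 + x))) = Real.exp u * E := by
    rw [phase_eq hx, hE, ← Real.exp_add]
    congr 1
    rw [hu]
    ring
  have hmod : modl N l x = ∑ k ∈ Finset.range N, (-l) ^ k / (Nat.factorial k : ℝ) * x ^ (2 * k) * E *
      ∑ n ∈ Finset.range N, PowerSeries.coeff n (phP ^ k) * x ^ n := by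
    unfold modl
    rw [Finset.sum_comm]
    refine Finset.sum_congr rfl fun k _ => ?_
    rw [Finset.mul_sum]
    refine Finset.sum_congr rfl fun n _ => ?_
    rw [pow_add]
    ring
  have hdec : Real.exp (-l * (x - Real.log (1 + x))) - modl N l x =
      (Real.exp u - ∑ k ∈ Finset.range N, u ^ k / (Nat.factorial k : ℝ)) * E +
      ∑ k ∈ Finset.range N, (-l) ^ k / (Nat.factorial k : ℝ) * x ^ (2 * k) * E *
      (phS x ^ k - ∑ n ∈ Finset.range N, PowerSeries.coeff n (phP ^ k) * x ^ n) := by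
    have h1 : (∑ k ∈ Finset.range N, u ^ k / (Nat.factorial k : ℝ)) * E =
        ∑ k ∈ Finset.range N, (-l) ^ k / (Nat.factorial k : ℝ) * x ^ (2 * k) * E * phS x ^ k := by
      rw [Finset.sum_mul]
      refine Finset.sum_congr rfl fun k _ => ?_
      rw [hu, mul_pow, mul_pow, ← pow_mul]
      ring
    rw [hmod, huE, sub_mul, h1]
    simp only [mul_sub, Finset.sum_sub_distrib]
    ring
  rw [hdec]
  refine (abs_add_le _ _).trans (add_le_add ?_ ?_)
  · rw [abs_mul, abs_of_pos hE0]
    have huC : u ≤ C * (l * x ^ 3) := by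
      have h1 : u = l * x ^ 2 * |phS x| := by
        rw [abs_of_nonpos (phS_nonpos hx), hu]; ring
      rw [h1]
      calc _ ≤ l * x ^ 2 * (C * x) := mul_le_mul_of_nonneg_left (hS x hx) (by positivity)
        _ = _ := by ring
    calc _ ≤ (u ^ N * Real.exp u) * E := mul_le_mul_of_nonneg_right (exp_rem hu0 N) hE0.le
      _ = u ^ N * Real.exp (-l * (x - Real.log (1 + x))) := by rw [huE]; ring
      _ ≤ (C * (l * x ^ 3)) ^ N *
          (Real.exp (-(1 / 4 * l) * x ^ 2) + Real.exp (-(1 / 4 * l) * x)) :=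
        mul_le_mul (pow_le_pow_left₀ hu0 huC N) (exp_phase_le hx hl0) (Real.exp_pos _).le
          (by positivity)
      _ = _ := by
        rw [mul_pow, mul_pow, ← pow_mul]
        ring
  · refine (Finset.abs_sum_le_sum_abs _ _).trans (Finset.sum_le_sum fun k _ => ?_)
    have hf : (1 : ℝ) ≤ (Nat.factorial k : ℝ) := by exact_mod_cast Nat.factorial_pos k
    have h1 : |(-l) ^ k / (Nat.factorial k : ℝ)| ≤ l ^ k := by
      rw [abs_div, abs_pow, abs_neg, abs_of_pos hl0, abs_of_pos (by linarith)]
      exact div_le_self (by positivity) hf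
    rw [abs_mul, abs_mul, abs_mul, abs_of_pos hE0, abs_of_pos (pow_pos hx (2 * k))]
    calc _ ≤ l ^ k * x ^ (2 * k) * E * (D k * x ^ N) := by
          apply mul_le_mul _ (hDS k x hx) (abs_nonneg _) (by positivity)
          gcongr
      _ = _ := by rw [pow_add]; ring

lemma coeff_phP_pow {n k : ℕ} (h : n < k) : PowerSeries.coeff n (phP ^ k) = 0 := by
  apply PowerSeries.coeff_of_lt_order
  have h1 : (1 : ℕ∞) ≤ phP.order := by
    apply PowerSeries.nat_le_order
    intro i hi
    have : i = 0 := by omega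
    subst this
    simp [phP]
  refine lt_of_lt_of_le ?_ (PowerSeries.le_order_pow phP k)
  calc (n : ℕ∞) < k := by exact_mod_cast h
    _ = k • (1 : ℕ∞) := by simp
    _ ≤ _ := nsmul_le_nsmul_right h1 k

lemma modl_int (N : ℕ) {l : ℝ} (hl : 0 < l) :
    IntegrableOn (modl N l) (Set.Ioi 0) ∧
    ∫ x in Set.Ioi (0 : ℝ), modl N l x = ∑ n ∈ Finset.range N,
      Real.Gamma (((n : ℝ) + 1) / 2) * laplaceCoeff n * l ^ (-(((n : ℝ) + 1) / 2)) := by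
  have hI : ∀ m : ℕ, IntegrableOn (fun x : ℝ => x ^ m * Real.exp (-(1 / 2 * l) * x ^ 2))
      (Set.Ioi 0) := fun m => (gauss_int m (b := 1 / 2 * l) (by positivity)).1
  constructor
  · unfold modl
    exact integrable_finsetSum _ fun n _ => integrable_finsetSum _ fun k _ =>
      (hI _).const_mul _
  · unfold modl
    rw [integral_finsetSum _ fun n _ => integrable_finsetSum _ fun k _ => (hI _).const_mul _]
    refine Finset.sum_congr rfl fun n hn => ?_
    rw [integral_finsetSum _ fun k _ => (hI _).const_mul _]
    have hn' : n + 1 ≤ N := Finset.mem_range.1 hn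
    have hG : Real.Gamma (((n : ℝ) + 1) / 2) ≠ 0 := (Real.Gamma_pos_of_pos (by positivity)).ne'
    have hc : Real.Gamma (((n : ℝ) + 1) / 2) * laplaceCoeff n = (1 / 2) *
        ∑ k ∈ Finset.range (n + 1),
      ((-1 : ℝ) ^ k * (2 : ℝ) ^ (((n : ℝ) + 1) / 2 + k) / (Nat.factorial k : ℝ)) *
        Real.Gamma (((n : ℝ) + 1) / 2 + k) * PowerSeries.coeff n (phP ^ k) := by
      unfold laplaceCoeff obell
      rw [← mul_assoc]
      congr 1
      field_simp
    rw [hc, ← Finset.sum_subset (Finset.range_mono hn')]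
    · rw [Finset.mul_sum, Finset.sum_mul]
      refine Finset.sum_congr rfl fun k _ => ?_
      rw [integral_const_mul, (gauss_int (n + 2 * k) (b := 1 / 2 * l) (by positivity)).2]
      have e1 : (((n + 2 * k : ℕ) : ℝ) + 1) / 2 = ((n : ℝ) + 1) / 2 + k := by
        push_cast; ring
      rw [e1, Real.mul_rpow (by norm_num) hl.le]
      have e2 : ((1 : ℝ) / 2) ^ (-(((n : ℝ) + 1) / 2 + k)) = 2 ^ (((n : ℝ) + 1) / 2 + k) := by
        rw [one_div, Real.inv_rpow (by norm_num), Real.rpow_neg (by norm_num), inv_inv]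
      have e3 : (-l) ^ k * l ^ (-(((n : ℝ) + 1) / 2 + k)) =
          (-1) ^ k * l ^ (-(((n : ℝ) + 1) / 2)) := by
        rw [neg_pow, mul_assoc]
        congr 1
        rw [← Real.rpow_natCast, ← Real.rpow_add hl]
        congr 1
        ring
      rw [e2]
      calc _ = ((-l) ^ k * l ^ (-(((n : ℝ) + 1) / 2 + k))) / (Nat.factorial k : ℝ) *
            PowerSeries.coeff n (phP ^ k) * (2 ^ (((n : ℝ) + 1) / 2 + k) * (1 / 2) *
              Real.Gamma (((n : ℝ) + 1) / 2 + k)) := by ring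
        _ = _ := by rw [e3]; ring
    · intro k _ hk
      rw [coeff_phP_pow (by simpa using hk)]
      simp

/-- Asymptotic expansion of `∫_0^∞ e^{-λ(x - log(1+x))} dx` as `λ → +∞`:
for every `N`, the integral equals `∑_{n=0}^{N-1} Γ((n+1)/2) c_n λ^{-(n+1)/2}`
up to an error `O(λ^{-(N+1)/2})`. -/
theorem laplace_integral_expansion (N : ℕ) :
    (fun l : ℝ =>
        (∫ x in Set.Ioi (0 : ℝ), Real.exp (-l * (x - Real.log (1 + x)))) -
          ∑ n ∈ Finset.range N,
            Real.Gamma (((n : ℝ) + 1) / 2) * laplaceCoeff n * l ^ (-(((n : ℝ) + 1) / 2)))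
      =O[atTop] fun l : ℝ => l ^ (-(((N : ℝ) + 1) / 2)) := by
  obtain ⟨g, ⟨K, hK⟩, hg⟩ := pointwise N
  refine IsBigO.of_bound K ?_
  filter_upwards [eventually_ge_atTop (1 : ℝ)] with l hl
  have hl0 : 0 < l := by linarith
  obtain ⟨h1, h2⟩ := modl_int N hl0
  rw [← h2, ← integral_sub (integrable_phase hl0) h1, Real.norm_of_nonneg (Real.rpow_nonneg hl0.le _)]
  refine (norm_integral_le_of_norm_le (hK l hl).1 ?_).trans (hK l hl).2
  filter_upwards [ae_restrict_mem measurableSet_Ioi] with x hx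
  exact hg l hl x hx
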